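/- Let N, s, t be integers with 1 ≤ s < t ≤ N − 2, and let e_1, …, e_N be integers with 0 = e_1 ≤ e_2 ≤ … ≤ e_N, e_2 ≥ 1, and e_s = e_{s+1} = … = e_{t−1}. Let r_1 ≥ r_2 ≥ … ≥ r_N be real numbers. Then S(e, r) ≤ B(s,t) · ( Σ_{j=1}^{s} (r_j − r_N) + Σ_{j=t}^{N} (r_j − r_N) ). -/

import Mathlib

open Finset

/-- The value of a chain of indices `l = [i₀, i₁, …, i_ℓ]`:
`Σ_j (r i_j − r i_{j+1}) (e i_j + e i_{j+1})`. -/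
def chainValue (e r : ℕ → ℝ) (l : List ℕ) : ℝ :=
  (List.zipWith (fun a b => (r a - r b) * (e a + e b)) l l.tail).sum

/-- A chain of indices for parameter `N`: a strictly increasing list of indices
starting at `1` and ending at `N`. -/
def IsChainIdx (N : ℕ) (l : List ℕ) : Prop :=
  l.Chain' (· < ·) ∧ l.head? = some 1 ∧ l.getLast? = some N

/-- `S(e, r)` : the minimum of the values of all chains. -/
noncomputable def Smin (e r : ℕ → ℝ) (N : ℕ) : ℝ :=
  sInf (chainValue e r '' {l | IsChainIdx N l})

/-- The quantity `B_i`: for `2 ≤ i ≤ s`, `B_i = e_i² / ((i−1)e_i − Σ_{j=2}^{i−1} e_j)`;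
for `t ≤ i ≤ N`, `B_i = e_i² / ((i−t+s)e_i − (e_1 + … + e_s + e_t + … + e_{i−1}))`. -/
noncomputable def Bcoef (e : ℕ → ℝ) (s t i : ℕ) : ℝ :=
  if i ≤ s then
    (e i) ^ 2 / (((i : ℝ) - 1) * e i - ∑ j ∈ Finset.Icc 2 (i - 1), e j)
  else
    (e i) ^ 2 /
      (((i : ℝ) - t + s) * e i -
        (∑ j ∈ Finset.Icc 1 s, e j + ∑ j ∈ Finset.Icc t (i - 1), e j))

/-- `B(s,t)`: the maximum of the `B_i` over `i ∈ {2,…,s} ∪ {t,…,N}`. -/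
noncomputable def Bmax (e : ℕ → ℝ) (s t N : ℕ) : ℝ :=
  sSup (Bcoef e s t '' (Set.Icc 2 s ∪ Set.Icc t N))

/-!
By strong induction on `N`, let `i` be the neighbour of `N` on the lower convex hull of the points
`(e j, r j)`, `j ≤ N`, and let `-d` be the slope of the supporting line through `i` and `N`.
Replacing `r` by `r + d e` makes this line horizontal, so the last step `i → N` of a chain becomes
free, and `i` has the smallest value of `r + d e`, so the induction hypothesis provides a chain from
`1` to `i`. The shear changes the value of every chain from `1` to `N` by the same amount
`d (e₁² - e_N²)`, and this is paid for by the inequality `e_N² ≤ B ∑ (e_N - e_j)` that defines `B`.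

For indices strictly between `s` and `t`, which `B` does not see, the inequality follows from
those at `s` and `t`, because `x² - B ∑ (x - e_j)` is convex in `x`.
-/

section Chains

variable {l : List ℕ} {a i N : ℕ}

theorem chainValue_singleton (e r : ℕ → ℝ) (a : ℕ) : chainValue e r [a] = 0 := by
  simp [chainValue]

theorem chainValue_cons_cons (e r : ℕ → ℝ) (a b : ℕ) (l : List ℕ) :
    chainValue e r (a :: b :: l) = (r a - r b) * (e a + e b) + chainValue e r (b :: l) := by
  simp [chainValue]

theorem chainValue_concat (e r : ℕ → ℝ) (M : ℕ) (hi : l.getLast? = some i) :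
    chainValue e r (l ++ [M]) = chainValue e r l + (r i - r M) * (e i + e M) := by
  induction l with
  | nil => simp at hi
  | cons a l ih =>
    cases l with
    | nil =>
      obtain rfl : a = i := by simpa using hi
      simp [chainValue_cons_cons, chainValue_singleton]
    | cons b l =>
      have ih := ih (by simpa using hi)
      simp only [List.cons_append, chainValue_cons_cons] at ih ⊢
      rw [ih, add_assoc]

/-- Since `(e a - e b) * (e a + e b) = e a ^ 2 - e b ^ 2`, the contribution of `d • e`
telescopes. -/
theorem chainValue_add_smul (e r : ℕ → ℝ) (d : ℝ) (ha : l.head? = some a)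
    (hi : l.getLast? = some i) :
    chainValue e (r + d • e) l = chainValue e r l + d * (e a ^ 2 - e i ^ 2) := by
  induction l generalizing a with
  | nil => simp at ha
  | cons x l ih =>
    obtain rfl : x = a := by simpa using ha
    cases l with
    | nil =>
      obtain rfl : x = i := by simpa using hi
      simp [chainValue_singleton]
    | cons b l =>
      have ih := ih rfl (by simpa using hi)
      simp only [chainValue_cons_cons, ih, Pi.add_apply, Pi.smul_apply, smul_eq_mul]
      ring

theorem IsChainIdx.singleton_one : IsChainIdx 1 [1] :=
  ⟨List.isChain_singleton 1, rfl, rfl⟩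

theorem IsChainIdx.concat (hl : IsChainIdx i l) (hiN : i < N) : IsChainIdx N (l ++ [N]) := by
  obtain ⟨hchain, hhead, hlast⟩ := hl
  refine ⟨List.isChain_append.mpr ⟨hchain, List.isChain_singleton N, ?_⟩, ?_, by simp⟩
  · simpa [hlast] using hiN
  · simp [List.head?_append, hhead]

theorem IsChainIdx.le_of_mem (hl : IsChainIdx N l) (hi : i ∈ l) : i ≤ N := by
  obtain ⟨init, rfl⟩ := List.getLast?_eq_some_iff.mp hl.2.2
  have hlt := (List.pairwise_append.mp (List.isChain_iff_pairwise.mp hl.1)).2.2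
  rcases List.mem_append.mp hi with hi | hi
  · exact (hlt i hi N (by simp)).le
  · exact (List.mem_singleton.mp hi).le

theorem finite_setOf_isChainIdx (N : ℕ) : {l | IsChainIdx N l}.Finite := by
  refine ((range (N + 1)).powerset.finite_toSet.image fun S => S.sort (· ≤ ·)).subset ?_
  intro l hl
  have hsorted : l.Pairwise (· < ·) := List.isChain_iff_pairwise.mp hl.1
  refine ⟨l.toFinset, ?_, ?_⟩
  · rw [mem_coe, mem_powerset]
    intro i hi
    exact mem_range_succ_iff.mpr (hl.le_of_mem (List.mem_toFinset.mp hi))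
  · exact (List.toFinset_sort _ hsorted.nodup).mpr (hsorted.imp le_of_lt)

theorem Smin_le_chainValue (e r : ℕ → ℝ) (hl : IsChainIdx N l) :
    Smin e r N ≤ chainValue e r l :=
  csInf_le ((finite_setOf_isChainIdx N).image _).bddBelow ⟨l, hl, rfl⟩

end Chains

theorem exists_supporting_slope {ι K : Type*} [Field K] [LinearOrder K] [IsStrictOrderedRing K]
    {S : Finset ι} {e r : ι → K} {m : ι} (hr : ∀ j ∈ S, r m ≤ r j) (he : ∃ j ∈ S, e j < e m) :
    ∃ d : K, 0 ≤ d ∧ (∃ i ∈ S, e i < e m ∧ (r + d • e) i = (r + d • e) m) ∧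
      ∀ j ∈ S, (r + d • e) m ≤ (r + d • e) j := by
  have hne : {j ∈ S | e j < e m}.Nonempty := by simpa [Finset.Nonempty] using he
  obtain ⟨i, hi, hmin⟩ := exists_min_image _ (fun j => (r j - r m) / (e m - e j)) hne
  simp only [mem_filter, and_imp] at hi hmin
  obtain ⟨hiS, hie⟩ := hi
  set d := (r i - r m) / (e m - e i)
  have hd0 : 0 ≤ d := div_nonneg (sub_nonneg.mpr (hr i hiS)) (sub_nonneg.mpr hie.le)
  have hdi : d * (e m - e i) = r i - r m := div_mul_cancel₀ _ (sub_pos.mpr hie).ne'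
  refine ⟨d, hd0, ⟨i, hiS, hie, ?_⟩, fun j hj => ?_⟩ <;>
    simp only [Pi.add_apply, Pi.smul_apply, smul_eq_mul]
  · linear_combination -hdi
  · rcases lt_or_ge (e j) (e m) with hje | hje
    · have hslope := (le_div_iff₀ (sub_pos.mpr hje)).mp (hmin j hj hje)
      linear_combination hslope
    · exact add_le_add (hr j hj) (mul_le_mul_of_nonneg_left hje hd0)

theorem exists_isChainIdx_chainValue_le {N : ℕ} {e w r : ℕ → ℝ} (hN : 1 ≤ N)
    (hw : ∀ j, 0 ≤ w j) (he : ∀ M ∈ Icc 2 N, e 1 < e M)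
    (hew : ∀ M ∈ Icc 2 N, e M ^ 2 - e 1 ^ 2 ≤ ∑ j ∈ Icc 1 M, w j * (e M - e j))
    (hr : ∀ j ∈ Icc 1 N, r N ≤ r j) :
    ∃ l, IsChainIdx N l ∧ chainValue e r l ≤ ∑ j ∈ Icc 1 N, w j * (r j - r N) := by
  induction N using Nat.strong_induction_on generalizing r with
  | _ N ih =>
  obtain rfl | hN2 : N = 1 ∨ 2 ≤ N := by omega
  · exact ⟨[1], .singleton_one, by simp [chainValue_singleton]⟩
  have hNmem : N ∈ Icc 2 N := mem_Icc.mpr ⟨hN2, le_rfl⟩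
  obtain ⟨d, hd, ⟨i, hi, hie, hiN⟩, hmin⟩ :=
    exists_supporting_slope hr ⟨1, mem_Icc.mpr ⟨le_rfl, hN⟩, he N hNmem⟩
  set r' := r + d • e with hr'
  obtain ⟨hi1, hiN_le⟩ := mem_Icc.mp hi
  have hi_lt : i < N := hiN_le.lt_of_ne (by rintro rfl; exact hie.false)
  obtain ⟨l, hl, hlv⟩ := ih i hi_lt (r := r') hi1
    (fun M hM => he M (Icc_subset_Icc_right hiN_le hM))
    (fun M hM => hew M (Icc_subset_Icc_right hiN_le hM))
    (fun j hj => hiN ▸ hmin j (Icc_subset_Icc_right hiN_le hj))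
  have hlN : IsChainIdx N (l ++ [N]) := hl.concat hi_lt
  refine ⟨l ++ [N], hlN, ?_⟩
  have hfree : chainValue e r' (l ++ [N]) = chainValue e r' l := by
    rw [chainValue_concat e r' N hl.2.2, hiN, sub_self, zero_mul, add_zero]
  have hshear := chainValue_add_smul e r d hlN.2.1 hlN.2.2
  have hextend : ∑ j ∈ Icc 1 i, w j * (r' j - r' i) ≤ ∑ j ∈ Icc 1 N, w j * (r' j - r' N) := by
    rw [hiN]
    exact sum_le_sum_of_subset_of_nonneg (Icc_subset_Icc_right hiN_le) fun j hj _ =>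
      mul_nonneg (hw j) (sub_nonneg.mpr (hmin j hj))
  have hsplit : ∑ j ∈ Icc 1 N, w j * (r' j - r' N) =
      ∑ j ∈ Icc 1 N, w j * (r j - r N) - d * ∑ j ∈ Icc 1 N, w j * (e N - e j) := by
    rw [mul_sum, ← sum_sub_distrib]
    refine sum_congr rfl fun j _ => ?_
    simp only [hr', Pi.add_apply, Pi.smul_apply, smul_eq_mul]
    ring
  have hpay := mul_le_mul_of_nonneg_left (hew N hNmem) hd
  linarith

section KeptIndices

/-- The indices `1 ≤ j ≤ M` outside the gap `s < j < t`: the differences `e M - e j` over these `j`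
add up to the denominator of `B_M`, with `j = M` contributing `0`. -/
def keptIndices (s t M : ℕ) : Finset ℕ := {j ∈ Icc 1 M | j ≤ s ∨ t ≤ j}

variable {e : ℕ → ℝ} {s t M : ℕ}

theorem sum_ite_mul_eq_mul_sum_keptIndices (s t M : ℕ) (B : ℝ) (x : ℕ → ℝ) :
    ∑ j ∈ Icc 1 M, (if j ≤ s ∨ t ≤ j then B else 0) * x j = B * ∑ j ∈ keptIndices s t M, x j := by
  simp only [keptIndices, sum_filter, mul_sum, ite_mul, zero_mul, mul_ite, mul_zero]

theorem keptIndices_of_le (hMs : M ≤ s) : keptIndices s t M = Icc 1 M :=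
  filter_true_of_mem fun _ hj => .inl ((mem_Icc.mp hj).2.trans hMs)

theorem keptIndices_of_le_of_lt (hsM : s ≤ M) (hMt : M < t) : keptIndices s t M = Icc 1 s := by
  ext j
  simp only [keptIndices, mem_filter, mem_Icc]
  omega

theorem sum_keptIndices_of_ge (hst : s < t) (htM : t ≤ M) (x : ℕ → ℝ) :
    ∑ j ∈ keptIndices s t M, x j = ∑ j ∈ Icc 1 s, x j + ∑ j ∈ Icc t M, x j := by
  have hdisj : Disjoint (Icc 1 s) (Icc t M) :=
    disjoint_left.mpr fun j hj hj' => by simp only [mem_Icc] at hj hj'; omega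
  rw [← sum_union hdisj]
  congr 1
  ext j
  simp only [keptIndices, mem_filter, mem_union, mem_Icc]
  omega

theorem sum_keptIndices_sub_pos (hs : 1 ≤ s) (he : MonotoneOn e (Set.Icc 1 M)) (hM : 1 ≤ M)
    (he1 : e 1 < e M) : 0 < ∑ j ∈ keptIndices s t M, (e M - e j) := by
  refine sum_pos' (fun j hj => sub_nonneg.mpr ?_) ⟨1, ?_, sub_pos.mpr he1⟩
  · have hj : j ∈ Set.Icc 1 M := by simpa using (mem_filter.mp hj).1
    exact he hj ⟨hM, le_rfl⟩ hj.2
  · exact mem_filter.mpr ⟨mem_Icc.mpr ⟨le_rfl, hM⟩, .inl hs⟩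

theorem Bcoef_of_le (he1 : e 1 = 0) (hM : 1 ≤ M) (hMs : M ≤ s) :
    Bcoef e s t M = e M ^ 2 / ∑ j ∈ keptIndices s t M, (e M - e j) := by
  rw [Bcoef, if_pos hMs, keptIndices_of_le hMs]
  congr 1
  obtain ⟨k, rfl⟩ := Nat.exists_eq_add_of_le' hM
  rw [sum_Icc_succ_top hM, sub_self, add_zero, sum_sub_distrib]
  have hsum : ∑ j ∈ Icc 1 k, e j = ∑ j ∈ Icc 2 k, e j := by
    refine (sum_subset (Icc_subset_Icc_left one_le_two) fun j hj hj' => ?_).symm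
    obtain rfl : j = 1 := by simp only [mem_Icc] at hj hj'; omega
    exact he1
  simp [hsum]

theorem Bcoef_of_ge (hst : s < t) (htM : t ≤ M) :
    Bcoef e s t M = e M ^ 2 / ∑ j ∈ keptIndices s t M, (e M - e j) := by
  rw [Bcoef, if_neg (by omega), sum_keptIndices_of_ge hst htM]
  congr 1
  obtain ⟨k, rfl⟩ : ∃ k, M = k + 1 := Nat.exists_eq_add_of_le' (by omega)
  rw [sum_Icc_succ_top htM, sub_self, add_zero, sum_sub_distrib, sum_sub_distrib]
  simp only [sum_const, Nat.card_Icc, nsmul_eq_mul, Nat.add_sub_cancel, Nat.cast_sub htM]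
  push_cast
  ring

end KeptIndices

section Bmax

variable {e : ℕ → ℝ} {s t M N : ℕ}

theorem Bcoef_le_Bmax (e : ℕ → ℝ) (hM : M ∈ Set.Icc 2 s ∪ Set.Icc t N) :
    Bcoef e s t M ≤ Bmax e s t N :=
  le_csSup (((Set.finite_Icc 2 s).union (Set.finite_Icc t N)).image _).bddAbove ⟨M, hM, rfl⟩

theorem Bmax_nonneg (hs : 1 ≤ s) (hst : s < t) (htN : t ≤ N) (he : MonotoneOn e (Set.Icc 1 N))
    (he1N : e 1 < e N) : 0 ≤ Bmax e s t N := by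
  have hden := sum_keptIndices_sub_pos (t := t) hs he (by omega) he1N
  calc 0 ≤ e N ^ 2 / ∑ j ∈ keptIndices s t N, (e N - e j) := div_nonneg (sq_nonneg _) hden.le
    _ = Bcoef e s t N := (Bcoef_of_ge hst htN).symm
    _ ≤ Bmax e s t N := Bcoef_le_Bmax e (.inr ⟨htN, le_rfl⟩)

theorem sq_le_Bmax_mul_sum_keptIndices_of_ge_or_ge (hs : 1 ≤ s) (hst : s < t) (he1 : e 1 = 0)
    (he : MonotoneOn e (Set.Icc 1 N)) (hpos : ∀ i ∈ Icc 2 N, 0 < e i) (hM : M ∈ Icc 1 N)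
    (hMst : M ≤ s ∨ t ≤ M) : e M ^ 2 ≤ Bmax e s t N * ∑ j ∈ keptIndices s t M, (e M - e j) := by
  obtain ⟨h1M, hMN⟩ := mem_Icc.mp hM
  obtain rfl | h2M : M = 1 ∨ 2 ≤ M := by omega
  · simp [keptIndices_of_le hs, he1]
  have hden : 0 < ∑ j ∈ keptIndices s t M, (e M - e j) :=
    sum_keptIndices_sub_pos hs (he.mono (Set.Icc_subset_Icc_right hMN)) h1M
      (he1.trans_lt (hpos M (mem_Icc.mpr ⟨h2M, hMN⟩)))
  have hcoef : Bcoef e s t M = e M ^ 2 / ∑ j ∈ keptIndices s t M, (e M - e j) :=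
    hMst.elim (Bcoef_of_le he1 h1M) (Bcoef_of_ge hst)
  rw [← div_le_iff₀ hden, ← hcoef]
  exact Bcoef_le_Bmax e (hMst.imp (⟨h2M, ·⟩) (⟨·, hMN⟩))

theorem sq_le_mul_sum_sub_of_mem_Icc {ι : Type*} {S : Finset ι} {c : ι → ℝ} {B a b x : ℝ}
    (hx : x ∈ Set.Icc a b) (ha : a ^ 2 ≤ B * ∑ j ∈ S, (a - c j))
    (hb : b ^ 2 ≤ B * ∑ j ∈ S, (b - c j)) : x ^ 2 ≤ B * ∑ j ∈ S, (x - c j) := by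
  have haffine : ConcaveOn ℝ Set.univ fun y => B * ∑ j ∈ S, (y - c j) := by
    refine ⟨convex_univ, fun y _ z _ p q _ _ hpq => le_of_eq ?_⟩
    simp only [sum_sub_distrib, sum_const, nsmul_eq_mul, smul_eq_mul]
    linear_combination (-B * ∑ j ∈ S, c j) * hpq
  have hconvex := even_two.convexOn_pow.sub haffine
  have hmax := hconvex.le_max_of_mem_Icc (Set.mem_univ a) (Set.mem_univ b) hx
  exact sub_nonpos.mp (hmax.trans (max_le (sub_nonpos.mpr ha) (sub_nonpos.mpr hb)))

theorem sq_le_Bmax_mul_sum_keptIndices (hs : 1 ≤ s) (hst : s < t) (htN : t ≤ N) (he1 : e 1 = 0)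
    (he : MonotoneOn e (Set.Icc 1 N)) (hpos : ∀ i ∈ Icc 2 N, 0 < e i) (hM : M ∈ Icc 1 N) :
    e M ^ 2 ≤ Bmax e s t N * ∑ j ∈ keptIndices s t M, (e M - e j) := by
  have hkept {i : ℕ} := sq_le_Bmax_mul_sum_keptIndices_of_ge_or_ge (M := i) hs hst he1 he hpos
  by_cases hMst : M ≤ s ∨ t ≤ M
  · exact hkept hM hMst
  obtain ⟨hsM, hMt⟩ : s < M ∧ M < t := by omega
  have hs_mem : s ∈ Icc 1 N := mem_Icc.mpr ⟨hs, by omega⟩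
  have ht_mem : t ∈ Icc 1 N := mem_Icc.mpr ⟨by omega, htN⟩
  have hbetween : e M ∈ Set.Icc (e s) (e t) := by
    simp only [← mem_coe, coe_Icc] at hs_mem hM ht_mem
    exact ⟨he hs_mem hM hsM.le, he hM ht_mem hMt.le⟩
  have hs_bound := hkept hs_mem (.inl le_rfl)
  have ht_bound := hkept ht_mem (.inr le_rfl)
  rw [keptIndices_of_le_of_lt le_rfl hst] at hs_bound
  rw [sum_keptIndices_of_ge hst le_rfl, Icc_self, sum_singleton, sub_self, add_zero] at ht_bound
  rw [keptIndices_of_le_of_lt hsM.le hMt]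
  exact sq_le_mul_sum_sub_of_mem_Icc hbetween hs_bound ht_bound

end Bmax

theorem stmt0_general {N s t : ℕ} {e r : ℕ → ℝ} (hs : 1 ≤ s) (hst : s < t) (htN : t ≤ N)
    (he1 : e 1 = 0) (he2 : 0 < e 2) (he : MonotoneOn e (Set.Icc 1 N))
    (hr : ∀ j ∈ Icc 1 N, r N ≤ r j) :
    Smin e r N ≤
      Bmax e s t N * ((∑ j ∈ Icc 1 s, (r j - r N)) + ∑ j ∈ Icc t N, (r j - r N)) := by
  have hpos : ∀ M ∈ Icc 2 N, 0 < e M := fun M hM => by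
    obtain ⟨h2M, hMN⟩ := mem_Icc.mp hM
    exact he2.trans_le (he ⟨one_le_two, by omega⟩ ⟨by omega, hMN⟩ h2M)
  have hlt : ∀ M ∈ Icc 2 N, e 1 < e M := fun M hM => he1.trans_lt (hpos M hM)
  have hB : 0 ≤ Bmax e s t N :=
    Bmax_nonneg hs hst htN he (hlt N (mem_Icc.mpr ⟨by omega, le_rfl⟩))
  obtain ⟨l, hl, hvalue⟩ := exists_isChainIdx_chainValue_le
    (w := fun j => if j ≤ s ∨ t ≤ j then Bmax e s t N else 0) (by omega)
    (fun j => by positivity) hlt (fun M hM => by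
      rw [sum_ite_mul_eq_mul_sum_keptIndices, he1, zero_pow two_ne_zero, sub_zero]
      exact sq_le_Bmax_mul_sum_keptIndices hs hst htN he1 he hpos
        (Icc_subset_Icc_left one_le_two hM)) hr
  rw [sum_ite_mul_eq_mul_sum_keptIndices, sum_keptIndices_of_ge hst htN] at hvalue
  exact (Smin_le_chainValue e r hl).trans hvalue

/-- Let `1 ≤ s < t ≤ N − 2`, let `e` be integers with
`0 = e₁ ≤ e₂ ≤ … ≤ e_N`, `e₂ ≥ 1` and `e_s = e_{s+1} = … = e_{t−1}`, and let
`r₁ ≥ r₂ ≥ … ≥ r_N` be reals. Then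
`S(e,r) ≤ B(s,t) · (Σ_{j=1}^{s} (r_j − r_N) + Σ_{j=t}^{N} (r_j − r_N))`. -/
theorem stmt0 (N s t : ℕ) (e : ℕ → ℤ) (r : ℕ → ℝ)
    (hs : 1 ≤ s) (hst : s < t) (htN : t ≤ N - 2)
    (he1 : e 1 = 0)
    (hemono : ∀ i, 1 ≤ i → i < N → e i ≤ e (i + 1))
    (he2 : 1 ≤ e 2)
    (heconst : ∀ i, s ≤ i → i ≤ t - 1 → e i = e s)
    (hr : ∀ i, 1 ≤ i → i < N → r (i + 1) ≤ r i) :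
    Smin (fun i => (e i : ℝ)) r N ≤
      Bmax (fun i => (e i : ℝ)) s t N *
        ((∑ j ∈ Icc 1 s, (r j - r N)) + ∑ j ∈ Icc t N, (r j - r N)) := by
  have he_mono : MonotoneOn e (Set.Icc 1 N) := monotoneOn_of_le_add_one Set.ordConnected_Icc
    fun i _ hi hi' => hemono i hi.1 hi'.2
  have hr_anti : AntitoneOn r (Set.Icc 1 N) := antitoneOn_of_add_one_le Set.ordConnected_Icc
    fun i _ hi hi' => hr i hi.1 hi'.2
  exact stmt0_general hs hst (by omega) (by simp [he1]) (by exact_mod_cast he2)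
    (Int.cast_mono.comp_monotoneOn he_mono)
    fun j hj => hr_anti (by simpa using hj) ⟨by omega, le_rfl⟩ (mem_Icc.mp hj).2
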